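/- For every κ > 0 and all real numbers a, b, one has ∫_ℝ dη / ((η²+κ²)((η−a)²+κ²)((η−b)²+κ²)) = π (a² + b² + (a−b)² + 24κ²) / (κ (a²+4κ²)(b²+4κ²)((a−b)²+4κ²)). -/

import Mathlib

open MeasureTheory

/-!
On the real line, `(η² + κ²)⁻¹ ((η - b)² + κ²)⁻¹` is the real part of a function `F` that is bounded
and holomorphic on the upper half-plane, and `(κ / π) ((η - a)² + κ²)⁻¹` is the Poisson kernel at
`a + κ i`, that is, the density of a Cauchy distribution. So the integral is
`(π / κ) Re F (a + κ i)`. Unlike a sum over the residues at `κ i`, `a + κ i` and `b + κ i`, this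
needs no case distinction when some of these poles coincide.

The Poisson formula for `F` at `w` follows from Cauchy's theorem applied to
`(F z - F w) / ((z - w) (z - conj w))`, which is holomorphic on the upper half-plane and decays
quadratically.
-/

open Filter Bornology Complex ProbabilityTheory Set
open scoped Topology NNReal

theorem diffContOnCl_dslope {E : Type*} [NormedAddCommGroup E] [NormedSpace ℂ E] [CompleteSpace E]
    {f : ℂ → E} {s : Set ℂ} {c : ℂ} (hf : DiffContOnCl ℂ f s) (hc : s ∈ 𝓝 c) :
    DiffContOnCl ℂ (dslope f c) s where
  differentiableOn := (differentiableOn_dslope hc).2 hf.differentiableOn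
  continuousOn := (continuousOn_dslope (mem_of_superset hc subset_closure)).2
    ⟨hf.continuousOn, hf.differentiableOn.differentiableAt hc⟩

theorem tendsto_div_sub_mul_sub_cobounded {𝕜 : Type*} [NormedField 𝕜] (c d : 𝕜) :
    Tendsto (fun z ↦ z / ((z - c) * (z - d))) (cobounded 𝕜) (𝓝 0) := by
  have inv_sub (e : 𝕜) : Tendsto (fun z ↦ (z - e)⁻¹) (cobounded 𝕜) (𝓝 0) :=
    tendsto_inv₀_cobounded.comp (tendsto_sub_const_cobounded e)
  have key := (inv_sub d).add (((inv_sub c).const_mul c).mul (inv_sub d))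
  rw [mul_zero, add_zero] at key
  refine key.congr' ?_
  filter_upwards [eventually_ne_cobounded c, eventually_ne_cobounded d] with z hzc hzd
  have := sub_ne_zero.2 hzc
  have := sub_ne_zero.2 hzd
  field

section UpperHalfPlane

variable {E : Type*} [NormedAddCommGroup E] [NormedSpace ℂ E]

theorem continuous_comp_ofReal_of_diffContOnCl {g : ℂ → E}
    (hg : DiffContOnCl ℂ g {z | 0 < z.im}) : Continuous fun x : ℝ ↦ g x :=
  hg.continuousOn.comp_continuous continuous_ofReal fun x ↦ by simp

theorem intervalIntegral_ofReal_eq_rect_sides {g : ℂ → E} (hg : DiffContOnCl ℂ g {z | 0 < z.im})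
    (a b : ℝ) {h : ℝ} (hh : 0 ≤ h) :
    ∫ x in a..b, g x = (∫ x in a..b, g (x + h * I)) - I • (∫ y in (0 : ℝ)..h, g (b + y * I))
      + I • ∫ y in (0 : ℝ)..h, g (a + y * I) := by
  have cauchy := integral_boundary_rect_eq_zero_of_continuousOn_of_differentiableOn g
    (⟨a, 0⟩ : ℂ) ⟨b, h⟩
    (hg.continuousOn.mono fun z hz ↦ by
      simpa using (uIcc_of_le hh ▸ hz.2 : z.im ∈ Icc 0 h).1)
    (hg.differentiableOn.mono fun z hz ↦ by simpa [hh] using hz.2.1)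
  simp only [ofReal_zero, zero_mul, add_zero] at cauchy
  rw [← sub_eq_zero, ← cauchy]
  abel

theorem norm_intervalIntegral_ofReal_le {g : ℂ → E} (hg : DiffContOnCl ℂ g {z | 0 < z.im})
    {R ε : ℝ} (hR : 0 < R) (hε : ∀ z : ℂ, 0 ≤ z.im → R ≤ ‖z‖ → ‖z • g z‖ ≤ ε) :
    ‖∫ x in -R..R, g x‖ ≤ 4 * ε := by
  have norm_le {z : ℂ} (hz : 0 ≤ z.im) (hzR : R ≤ ‖z‖) : ‖g z‖ ≤ ε / R := by
    rw [le_div_iff₀' hR]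
    calc R * ‖g z‖ ≤ ‖z‖ * ‖g z‖ := by gcongr
      _ = ‖z • g z‖ := (norm_smul z (g z)).symm
      _ ≤ ε := hε z hz hzR
  have norm_top : ‖∫ x in -R..R, g (x + R * I)‖ ≤ ε / R * |R - -R| :=
    intervalIntegral.norm_integral_le_of_norm_le_const fun x _ ↦
      norm_le (by simp [hR.le]) (by simpa [abs_of_pos hR] using abs_im_le_norm (x + R * I))
  have norm_side {r : ℝ} (hr : |r| = R) : ‖∫ y in (0 : ℝ)..R, g (r + y * I)‖ ≤ ε / R * |R - 0| := by
    refine intervalIntegral.norm_integral_le_of_norm_le_const fun y hy ↦ norm_le ?_ ?_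
    · simpa using (uIoc_of_le hR.le ▸ hy).1.le
    · simpa [hr] using abs_re_le_norm (r + y * I)
  calc ‖∫ x in -R..R, g x‖
      ≤ ‖∫ x in -R..R, g (x + R * I)‖ + ‖I • ∫ y in (0 : ℝ)..R, g (R + y * I)‖
        + ‖I • ∫ y in (0 : ℝ)..R, g ((-R : ℝ) + y * I)‖ := by
        rw [intervalIntegral_ofReal_eq_rect_sides hg (-R) R hR.le]
        exact (norm_add_le _ _).trans (by gcongr; exact norm_sub_le _ _)
    _ ≤ ε / R * |R - -R| + ε / R * |R - 0| + ε / R * |R - 0| := by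
        simp only [norm_smul, norm_I, one_mul]
        gcongr
        · exact norm_side (abs_of_pos hR)
        · exact norm_side (by rw [abs_neg, abs_of_pos hR])
    _ = 4 * ε := by
        rw [sub_neg_eq_add, sub_zero, abs_of_pos hR, abs_of_pos (by positivity)]
        field

theorem integral_ofReal_eq_zero_of_tendsto_smul {g : ℂ → E}
    (hg : DiffContOnCl ℂ g {z | 0 < z.im}) (hint : Integrable fun x : ℝ ↦ g x)
    (hdecay : Tendsto (fun z ↦ z • g z) (cobounded ℂ ⊓ 𝓟 {z | 0 ≤ z.im}) (𝓝 0)) :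
    ∫ x : ℝ, g x = 0 := by
  refine tendsto_nhds_unique
    (intervalIntegral_tendsto_integral hint tendsto_neg_atTop_atBot tendsto_id) ?_
  refine Metric.nhds_basis_closedBall.tendsto_right_iff.2 fun ε hε ↦ ?_
  have small : ∀ᶠ z in cobounded ℂ, 0 ≤ z.im → ‖z • g z‖ ≤ ε / 4 := by
    simpa [eventually_inf_principal] using
      hdecay.eventually (Metric.closedBall_mem_nhds 0 (by positivity : 0 < ε / 4))
  obtain ⟨R₀, -, hR₀⟩ := hasBasis_cobounded_norm.eventually_iff.1 small
  filter_upwards [eventually_ge_atTop R₀, eventually_gt_atTop 0] with R hR hRpos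
  rw [mem_closedBall_zero_iff]
  calc ‖∫ x in -R..R, g x‖ ≤ 4 * (ε / 4) :=
        norm_intervalIntegral_ofReal_le hg hRpos fun z hz hzR ↦ hR₀ (hR.trans hzR) hz
    _ = ε := by ring

variable {F : ℂ → E} {C : ℝ}

theorem diffContOnCl_inv_sub_smul_dslope [CompleteSpace E]
    (hF : DiffContOnCl ℂ F {z | 0 < z.im}) {c d : ℂ} (hc : 0 < c.im) (hd : d.im < 0) :
    DiffContOnCl ℂ (fun z ↦ (z - d)⁻¹ • dslope F c z) {z | 0 < z.im} := by
  refine .smul (.inv (by fun_prop : Differentiable ℂ _).diffContOnCl fun z hz hzd ↦ ?_)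
    (diffContOnCl_dslope hF ((isOpen_im_gt 0).mem_nhds hc))
  rw [closure_setOfPred_lt_im] at hz
  exact (hd.trans_le hz).ne' (congrArg im (sub_eq_zero.1 hzd))

theorem tendsto_smul_inv_sub_smul_dslope (hC : ∀ z : ℂ, 0 ≤ z.im → ‖F z‖ ≤ C) (c d : ℂ) :
    Tendsto (fun z ↦ z • (z - d)⁻¹ • dslope F c z) (cobounded ℂ ⊓ 𝓟 {z | 0 ≤ z.im}) (𝓝 0) := by
  have bounded : IsBoundedUnder (· ≤ ·) (cobounded ℂ ⊓ 𝓟 {z | 0 ≤ z.im})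
      (norm ∘ fun z ↦ F z - F c) := by
    refine isBoundedUnder_of_eventually_le (a := C + ‖F c‖) ?_
    filter_upwards [mem_inf_of_right (mem_principal_self _)] with z hz
    exact (norm_sub_le _ _).trans (by gcongr; exact hC z hz)
  refine (((tendsto_div_sub_mul_sub_cobounded c d).mono_left
    inf_le_left).zero_smul_isBoundedUnder_le bounded).congr' ?_
  filter_upwards [mem_inf_of_left (eventually_ne_cobounded c)] with z hz
  rw [dslope_of_ne _ hz, slope_def_module, smul_smul, smul_smul, div_eq_mul_inv, mul_inv]
  congr 1
  ring

theorem cauchyPDFReal_smul_sub (F : ℂ → E) (x₀ : ℝ) {γ : ℝ≥0} (hγ : γ ≠ 0) (x : ℝ) :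
    cauchyPDFReal x₀ γ x • (F x - F (x₀ + γ * I)) =
      (γ / Real.pi : ℝ) • ((x : ℂ) - (x₀ - γ * I))⁻¹ • dslope F (x₀ + γ * I) x := by
  have hne : (x : ℂ) ≠ x₀ + γ * I := fun h ↦ hγ <| by simpa [eq_comm] using congrArg im h
  have factor : ((x : ℂ) - x₀) ^ 2 + γ ^ 2 = (x - (x₀ - γ * I)) * (x - (x₀ + γ * I)) := by
    linear_combination (γ : ℂ) ^ 2 * I_sq
  rw [dslope_of_ne _ hne, slope_def_module, ← coe_smul (γ / Real.pi), smul_smul, smul_smul,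
    ← coe_smul, cauchyPDFReal_def]
  congr 1
  push_cast
  rw [factor, mul_inv]
  ring

theorem integrable_cauchyPDFReal_smul {f : ℝ → E} (hf : AEStronglyMeasurable f)
    (hC : ∀ x, ‖f x‖ ≤ C) (x₀ : ℝ) (γ : ℝ≥0) :
    Integrable fun x ↦ cauchyPDFReal x₀ γ x • f x :=
  (integrable_cauchyPDFReal x₀).smul_bdd C hf (ae_of_all _ hC)

theorem integral_cauchyPDFReal_smul [CompleteSpace E] (hF : DiffContOnCl ℂ F {z | 0 < z.im})
    (hC : ∀ z : ℂ, 0 ≤ z.im → ‖F z‖ ≤ C) (x₀ : ℝ) {γ : ℝ≥0} (hγ : γ ≠ 0) :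
    ∫ x : ℝ, cauchyPDFReal x₀ γ x • F x = F (x₀ + γ * I) := by
  set w : ℂ := x₀ + γ * I with hw
  set g : ℂ → E := fun z ↦ (z - (x₀ - γ * I))⁻¹ • dslope F w z
  have hγpos : (0 : ℝ) < γ := by positivity
  have diff_eq : (fun x : ℝ ↦ cauchyPDFReal x₀ γ x • (F x - F w)) =
      fun x : ℝ ↦ (γ / Real.pi : ℝ) • g x := funext (cauchyPDFReal_smul_sub F x₀ hγ)
  have F_int : Integrable fun x : ℝ ↦ cauchyPDFReal x₀ γ x • F x :=
    integrable_cauchyPDFReal_smul (continuous_comp_ofReal_of_diffContOnCl hF).aestronglyMeasurable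
      (fun x ↦ hC x (by simp)) x₀ γ
  have const_int : Integrable fun x ↦ cauchyPDFReal x₀ γ x • F w :=
    (integrable_cauchyPDFReal x₀).smul_const (F w)
  have g_int : Integrable fun x : ℝ ↦ g x := by
    have diff_int := F_int.sub const_int
    simp only [← smul_sub, diff_eq, Pi.sub_def] at diff_int
    exact (integrable_fun_smul_iff (by positivity) _).1 diff_int
  have g_integral : ∫ x : ℝ, g x = 0 :=
    integral_ofReal_eq_zero_of_tendsto_smul
      (diffContOnCl_inv_sub_smul_dslope hF (by simpa [hw] using hγpos) (by simpa using hγpos))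
      g_int (tendsto_smul_inv_sub_smul_dslope hC _ _)
  have diff_integral : ∫ x : ℝ, cauchyPDFReal x₀ γ x • (F x - F w) = 0 := by
    rw [diff_eq, integral_smul, g_integral, smul_zero]
  simp only [smul_sub] at diff_integral
  rw [integral_sub F_int const_int, sub_eq_zero] at diff_integral
  rw [diff_integral, integral_smul_const, integral_cauchyPDFReal_eq_one x₀ hγ, one_smul]

end UpperHalfPlane

theorem integral_cauchyPDFReal_mul_re {F : ℂ → ℂ} {C : ℝ} (hF : DiffContOnCl ℂ F {z | 0 < z.im})
    (hC : ∀ z : ℂ, 0 ≤ z.im → ‖F z‖ ≤ C) (x₀ : ℝ) {γ : ℝ≥0} (hγ : γ ≠ 0) :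
    ∫ x : ℝ, cauchyPDFReal x₀ γ x * (F x).re = (F (x₀ + γ * I)).re := by
  have F_int : Integrable fun x : ℝ ↦ cauchyPDFReal x₀ γ x • F x :=
    integrable_cauchyPDFReal_smul (continuous_comp_ofReal_of_diffContOnCl hF).aestronglyMeasurable
      (fun x ↦ hC x (by simp)) x₀ γ
  rw [← integral_cauchyPDFReal_smul hF hC x₀ hγ]
  simpa using integral_re F_int

section AnalyticSignal

/-- The analytic signal of the product `((x ^ 2 + κ ^ 2) * ((x - b) ^ 2 + κ ^ 2))⁻¹`: the function
decaying at infinity and holomorphic on the upper half-plane whose real part on the real line is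
that product. It is the part of the partial fraction decomposition with poles at `-κ i` and
`b - κ i`, times two, written in a form that stays valid for `b = 0`. -/
noncomputable def analyticSignal (κ b : ℝ) (z : ℂ) : ℂ :=
  (κ * (b ^ 2 + 4 * κ ^ 2) : ℝ)⁻¹ •
    (I * ((z + κ * I)⁻¹ + (z - b + κ * I)⁻¹ + 2 * κ * I * ((z + κ * I)⁻¹ * (z - b + κ * I)⁻¹)))

variable {κ : ℝ}

theorem add_mul_I_ne_zero_of_im_nonneg (hκ : 0 < κ) {z : ℂ} (hz : 0 ≤ z.im) : z + κ * I ≠ 0 :=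
  fun h ↦ (add_pos_of_nonneg_of_pos hz hκ).ne' (by simpa using congrArg im h)

theorem norm_inv_add_mul_I_le (hκ : 0 < κ) {z : ℂ} (hz : 0 ≤ z.im) : ‖(z + κ * I)⁻¹‖ ≤ κ⁻¹ := by
  rw [norm_inv]
  gcongr
  calc κ ≤ (z + κ * I).im := by simpa using hz
    _ ≤ ‖z + κ * I‖ := im_le_norm _

theorem diffContOnCl_analyticSignal (hκ : 0 < κ) (b : ℝ) :
    DiffContOnCl ℂ (analyticSignal κ b) {z | 0 < z.im} := by
  refine DifferentiableOn.diffContOnCl fun z hz ↦ DifferentiableAt.differentiableWithinAt ?_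
  rw [closure_setOfPred_lt_im] at hz
  have h₀ : z + κ * I ≠ 0 := add_mul_I_ne_zero_of_im_nonneg hκ hz
  have h₁ : z - b + κ * I ≠ 0 := add_mul_I_ne_zero_of_im_nonneg hκ (by simpa using hz)
  unfold analyticSignal
  fun_prop (disch := assumption)

theorem norm_analyticSignal_le (hκ : 0 < κ) (b : ℝ) {z : ℂ} (hz : 0 ≤ z.im) :
    ‖analyticSignal κ b z‖ ≤ 4 / (κ ^ 2 * (b ^ 2 + 4 * κ ^ 2)) := by
  have h₀ : ‖(z + κ * I)⁻¹‖ ≤ κ⁻¹ := norm_inv_add_mul_I_le hκ hz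
  have h₁ : ‖(z - b + κ * I)⁻¹‖ ≤ κ⁻¹ := norm_inv_add_mul_I_le hκ (by simpa using hz)
  have norm_two_mul : ‖(2 * κ * I : ℂ)‖ = 2 * κ := by simp [abs_of_pos hκ]
  calc ‖analyticSignal κ b z‖
      ≤ (κ * (b ^ 2 + 4 * κ ^ 2))⁻¹ * (κ⁻¹ + κ⁻¹ + 2 * κ * (κ⁻¹ * κ⁻¹)) := by
        rw [analyticSignal, norm_smul, norm_mul, norm_I, one_mul,
          Real.norm_of_nonneg (by positivity)]
        gcongr
        refine (norm_add₃_le ..).trans ?_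
        rw [norm_mul (2 * κ * I : ℂ), norm_mul (z + κ * I)⁻¹, norm_two_mul]
        gcongr
    _ = 4 / (κ ^ 2 * (b ^ 2 + 4 * κ ^ 2)) := by field

theorem re_analyticSignal (hκ : 0 < κ) (b x : ℝ) {y : ℝ} (hy : 0 ≤ y) :
    (analyticSignal κ b (x + y * I)).re =
      ((y + κ) * (x ^ 2 + (x - b) ^ 2 + 2 * (y + κ) ^ 2) - 2 * κ * (x * (x - b) - (y + κ) ^ 2)) /
        (κ * (b ^ 2 + 4 * κ ^ 2) * (x ^ 2 + (y + κ) ^ 2) * ((x - b) ^ 2 + (y + κ) ^ 2)) := by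
  have : 0 < y + κ := by positivity
  simp only [analyticSignal, mul_inv_rev, smul_re, mul_re, I_re, add_re, inv_re, ofReal_re,
    mul_zero, ofReal_im, I_im, mul_one, sub_self, add_zero, normSq_apply, add_im, mul_im, zero_add,
    sub_re, sub_im, sub_zero, re_ofNat, im_ofNat, zero_mul, inv_im, neg_add_rev, zero_sub, one_mul,
    smul_eq_mul]
  field

theorem re_analyticSignal_ofReal (hκ : 0 < κ) (b x : ℝ) :
    (analyticSignal κ b x).re = ((x ^ 2 + κ ^ 2) * ((x - b) ^ 2 + κ ^ 2))⁻¹ := by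
  have re_eq := re_analyticSignal hκ b x le_rfl
  simp only [ofReal_zero, zero_mul, add_zero, zero_add] at re_eq
  rw [re_eq]
  field

theorem re_analyticSignal_add_mul_I (hκ : 0 < κ) (a b : ℝ) :
    (analyticSignal κ b (a + κ * I)).re = (a ^ 2 + b ^ 2 + (a - b) ^ 2 + 24 * κ ^ 2) /
      ((a ^ 2 + 4 * κ ^ 2) * (b ^ 2 + 4 * κ ^ 2) * ((a - b) ^ 2 + 4 * κ ^ 2)) := by
  rw [re_analyticSignal hκ b a hκ.le, show (κ + κ) ^ 2 = 4 * κ ^ 2 by ring]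
  field

end AnalyticSignal

/-- The residue-calculus evaluation of the integral of the product of
three resolvent symbols. -/
theorem stmt5 (κ a b : ℝ) (hκ : 0 < κ) :
    ∫ η : ℝ, ((η ^ 2 + κ ^ 2) * ((η - a) ^ 2 + κ ^ 2) * ((η - b) ^ 2 + κ ^ 2))⁻¹ =
      Real.pi * (a ^ 2 + b ^ 2 + (a - b) ^ 2 + 24 * κ ^ 2) /
        (κ * (a ^ 2 + 4 * κ ^ 2) * (b ^ 2 + 4 * κ ^ 2) * ((a - b) ^ 2 + 4 * κ ^ 2)) := by
  lift κ to ℝ≥0 using hκ.le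
  have integrand_eq (η : ℝ) :
      ((η ^ 2 + (κ : ℝ) ^ 2) * ((η - a) ^ 2 + (κ : ℝ) ^ 2) * ((η - b) ^ 2 + (κ : ℝ) ^ 2))⁻¹ =
        Real.pi / κ * (cauchyPDFReal a κ η * (analyticSignal κ b η).re) := by
    rw [re_analyticSignal_ofReal hκ, cauchyPDFReal_def]
    field
  simp only [integrand_eq]
  rw [integral_const_mul, integral_cauchyPDFReal_mul_re (diffContOnCl_analyticSignal hκ b)
    (fun z ↦ norm_analyticSignal_le hκ b) a (NNReal.coe_pos.1 hκ).ne',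
    re_analyticSignal_add_mul_I hκ]
  field
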